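/- arXiv:1703.07273 — 6 statements merged into one kernel-verified Lean document; each statement's English description precedes it below -/
import Mathlib

section
/- Let F be a field, let A be a finite-dimensional algebra over F, and let H be an additive subgroup of A that spans A as an F-vector space. Then H contains a unit of A. -/
/-!
The additive group `H` is closed under sums only, so a polynomial function vanishing on `H` need
not vanish on `A`. However, if `x ↦ M (x, …, x)` with `M` multilinear vanishes on `H`, then by
inclusion-exclusion so does its full polarization `v ↦ ∑ σ, M (v ∘ σ)` on tuples from `H`; the
polarization is multilinear, hence it vanishes on all tuples, as `H` spans. This argument is
uniform in the characteristic (`sum_perm_eq_zero`).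

Extend scalars to an algebraic closure `K` and divide by the Jacobson radical. By Wedderburn–Artin
the result is a product of matrix algebras over `K`, regarded as block diagonal matrices. There `x`
is a unit iff `det x ≠ 0`, the determinant has the form `M (x, …, x)` with `M` multilinear in the
rows, and its polarization takes the value `1` at the tuple of diagonal matrix units `E_ii`: the
only permutation `σ` for which row `i` of `E_{σ i, σ i}` is nonzero for every `i` is the identity.
So the determinant is nonzero somewhere on `H`. Finally units lift along the quotient by the
nilpotent radical and descend along the injection `A → K ⊗ A`.
-/

open Finset in
/-- Polarization: a multilinear map with zero diagonal values on the sums of the `v i` has zero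
symmetrization at `v`. No factorial has to be inverted. -/
lemma sum_perm_eq_zero_of_diag {K V I : Type*} [Field K] [AddCommGroup V] [Module K V]
    [Fintype I] [DecidableEq I] (M : MultilinearMap K (fun _ : I => V) K) (v : I → V)
    (h : ∀ t : Finset I, M (fun _ => ∑ i ∈ t, v i) = 0) :
    ∑ σ : Equiv.Perm I, M (fun i => v (σ i)) = 0 := by
  -- `S i` consists of the maps `I → I` that miss the value `i`; bijections miss no value.
  let S : I → Finset (I → I) := fun i => univ.filter fun r => ∀ j, r j ≠ i
  have key := inclusion_exclusion_sum_inf_compl (univ : Finset I) S (fun r => M (fun i => v (r i)))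
  have h0 : ∀ t ∈ (univ : Finset I).powerset,
      (-1) ^ #t • ∑ r ∈ t.inf S, M (fun i => v (r i)) = 0 := by
    intro t _
    have h1 : t.inf S = Fintype.piFinset (fun _ : I => tᶜ) := by
      ext r
      simp only [mem_inf, S, mem_filter, mem_univ, true_and, Fintype.mem_piFinset, mem_compl]
      exact ⟨fun h j hj => h _ hj j rfl, fun h i hi j hj => h j (hj ▸ hi)⟩
    have h2 := M.map_sum_finset (fun _ i => v i) (fun _ : I => tᶜ)
    rw [h1, ← h2, h, smul_zero]
  rw [sum_eq_zero h0] at key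
  rw [← key]
  refine sum_bij (fun σ _ => (σ : I → I)) ?_ ?_ ?_ ?_
  · intro σ _
    simp only [mem_inf, mem_univ, S, mem_compl, mem_filter, true_and, true_implies]
    intro i hi
    exact hi (σ.symm i) (by simp)
  · intro σ _ τ _ h
    exact DFunLike.coe_injective h
  · intro r hr
    simp only [mem_inf, mem_univ, S, mem_compl, mem_filter, true_and, true_implies] at hr
    have hs : Function.Surjective r := fun i => by simpa using hr i
    exact ⟨Equiv.ofBijective r (Finite.surjective_iff_bijective.1 hs), mem_univ _, rfl⟩
  · intro σ _
    rfl

/-- If the diagonal of a multilinear map vanishes on a spanning additive subgroup, then its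
symmetrization vanishes everywhere. -/
lemma sum_perm_eq_zero {K V I : Type*} [Field K] [AddCommGroup V] [Module K V]
    [Fintype I] [DecidableEq I] (M : MultilinearMap K (fun _ : I => V) K) (H : AddSubgroup V)
    (hH : Submodule.span K (H : Set V) = ⊤) (h : ∀ x ∈ H, M (fun _ => x) = 0) (v : I → V) :
    ∑ σ : Equiv.Perm I, M (fun i => v (σ i)) = 0 := by
  let P : MultilinearMap K (fun _ : I => V) K :=
    ∑ σ : Equiv.Perm I, M.domDomCongr σ
  have hP : ∀ w, P w = ∑ σ : Equiv.Perm I, M (fun i => w (σ i)) := fun w => by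
    simp [P]
  have : P = 0 := by
    refine Module.Basis.ext_multilinear (fun _ => Module.Basis.ofSpan hH.ge) fun w => ?_
    rw [hP]
    refine sum_perm_eq_zero_of_diag M (fun i => Module.Basis.ofSpan hH.ge (w i)) fun t => ?_
    exact h _ (H.sum_mem fun i _ => Module.Basis.ofSpan_subset hH.ge ⟨_, rfl⟩)
  rw [← hP, this]
  rfl

/-- The polarization of `det ∘ ρ` takes the value `1` at preimages of the diagonal matrix units, so
`det ∘ ρ` cannot vanish on a spanning additive subgroup. -/
lemma exists_det_ne_zero {K V I : Type*} [Field K] [AddCommGroup V] [Module K V]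
    [Fintype I] [DecidableEq I] (ρ : V →ₗ[K] Matrix I I K)
    (hρ : ∀ i, ∃ x, ρ x = Matrix.diagonal (Pi.single i 1)) (H : AddSubgroup V)
    (hH : Submodule.span K (H : Set V) = ⊤) : ∃ x ∈ H, (ρ x).det ≠ 0 := by
  by_contra! hcon
  choose e he using hρ
  let M : MultilinearMap K (fun _ : I => V) K :=
    (Matrix.detRowAlternating (R := K) (n := I)).toMultilinearMap.compLinearMap
      (fun i => (LinearMap.proj i).comp ρ)
  have hM : ∀ v, M v = (Matrix.of fun i => ρ (v i) i).det := fun v => rfl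
  have h0 := sum_perm_eq_zero M H hH hcon e
  rw [Finset.sum_eq_single 1] at h0
  · rw [hM] at h0
    have : (Matrix.of fun i => ρ (e ((1 : Equiv.Perm I) i)) i) = (1 : Matrix I I K) := by
      ext i j
      simp [he, Matrix.diagonal_apply, Matrix.one_apply]
    rw [this, Matrix.det_one] at h0
    exact one_ne_zero h0
  · intro σ _ hσ
    obtain ⟨i, hi⟩ : ∃ i, σ i ≠ i := by
      by_contra! h
      exact hσ (Equiv.ext h)
    rw [hM]
    refine Matrix.det_eq_zero_of_row_eq_zero i fun j => ?_
    simp [he, Matrix.diagonal_apply, hi.symm]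
  · simp

/-- Units descend along injective homomorphisms out of an Artinian ring, because there the
non-zero-divisors are units. -/
lemma isUnit_of_isUnit_map {A B : Type*} [Ring A] [IsArtinianRing A] [Ring B] (f : A →+* B)
    (hf : Function.Injective f) {x : A} (hu : IsUnit (f x)) : IsUnit x := by
  refine IsArtinianRing.isUnit_of_mem_nonZeroDivisors ⟨fun y hy => hf ?_, fun y hy => hf ?_⟩
  · rw [map_zero]
    exact hu.mul_right_eq_zero.1 (by rw [← map_mul, hy, map_zero])
  · rw [map_zero]
    exact hu.mul_left_eq_zero.1 (by rw [← map_mul, hy, map_zero])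

/-- The Jacobson radical of an Artinian ring is nilpotent, and units lift along quotients by
nilpotent ideals. -/
lemma isUnit_of_isUnit_quotient_jacobson {B : Type*} [Ring B] [IsArtinianRing B] {x : B}
    (hx : IsUnit (Ideal.Quotient.mk (Ring.jacobson B) x)) : IsUnit x := by
  obtain ⟨n, hn⟩ := IsSemiprimaryRing.isNilpotent (R := B)
  have key : ∀ z : B, Ideal.Quotient.mk (Ring.jacobson B) z = 1 → IsUnit z := by
    intro z hz
    have h1 : z - 1 ∈ Ring.jacobson B := by
      rw [← Ideal.Quotient.eq_zero_iff_mem, map_sub, hz, map_one, sub_self]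
    have h2 : IsNilpotent (z - 1) := ⟨n, by
      have := Ideal.pow_mem_pow h1 n
      rwa [hn] at this⟩
    simpa using h2.isUnit_one_add
  obtain ⟨y', hy1, hy2⟩ := isUnit_iff_exists.1 hx
  obtain ⟨y, rfl⟩ := Ideal.Quotient.mk_surjective y'
  obtain ⟨u, hu⟩ := (key (x * y) (by rw [map_mul, hy1])).exists_right_inv
  obtain ⟨w, hw⟩ := (key (y * x) (by rw [map_mul, hy2])).exists_left_inv
  rw [mul_assoc] at hu
  rw [← mul_assoc] at hw
  exact isUnit_iff_exists.2 ⟨y * u, hu, by rwa [← left_inv_eq_right_inv hw hu]⟩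

/-- The algebraically closed case: by Wedderburn–Artin, invertibility is detected by the determinant
of a linear map to block diagonal matrices whose image contains the diagonal matrix units. -/
lemma exists_isUnit_of_isAlgClosed {K B : Type*} [Field K] [IsAlgClosed K] [Ring B] [Algebra K B]
    [FiniteDimensional K B] (H : AddSubgroup B) (hH : Submodule.span K (H : Set B) = ⊤) :
    ∃ x ∈ H, IsUnit x := by
  have : IsArtinianRing B := IsArtinianRing.of_finite K B
  have : FiniteDimensional K (B ⧸ Ring.jacobson B) :=
    Module.Finite.of_surjective (Ideal.Quotient.mkₐ K (Ring.jacobson B)).toLinearMap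
      Ideal.Quotient.mk_surjective
  obtain ⟨n, d, -, ⟨e⟩⟩ :=
    IsSemisimpleRing.exists_algEquiv_pi_matrix_of_isAlgClosed K (B ⧸ Ring.jacobson B)
  let β : (Π k, Matrix (Fin (d k)) (Fin (d k)) K) →ₗ[K]
      Matrix (Σ k, Fin (d k)) (Σ k, Fin (d k)) K :=
    { toFun := Matrix.blockDiagonal'
      map_add' := Matrix.blockDiagonal'_add
      map_smul' := fun c M => Matrix.blockDiagonal'_smul c M }
  let π := e.toAlgHom.comp (Ideal.Quotient.mkₐ K (Ring.jacobson B))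
  have hπ : Function.Surjective π := e.surjective.comp Ideal.Quotient.mk_surjective
  obtain ⟨x, hxH, hx⟩ := exists_det_ne_zero (β.comp π.toLinearMap) (fun i => by
    obtain ⟨x, hx⟩ := hπ fun k => Matrix.diagonal fun j => (Pi.single i 1 : _ → K) ⟨k, j⟩
    refine ⟨x, ?_⟩
    change Matrix.blockDiagonal' (π x) = _
    rw [hx, Matrix.blockDiagonal'_diagonal]) H hH
  refine ⟨x, hxH, isUnit_of_isUnit_quotient_jacobson ?_⟩
  rw [← MulEquiv.isUnit_map e]
  change IsUnit (π x)
  change (Matrix.blockDiagonal' (π x)).det ≠ 0 at hx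
  have := IsArtinianRing.of_finite K (Π k, Matrix (Fin (d k)) (Fin (d k)) K)
  refine isUnit_of_isUnit_map
    (Matrix.blockDiagonal'RingHom (fun k => Fin (d k)) K) Matrix.blockDiagonal'_injective ?_
  exact (Matrix.isUnit_iff_isUnit_det _).2 hx.isUnit

/-- **The unit theorem.** If `A` is a finite-dimensional algebra over a field `F` and `H` is
an additive subgroup of `A` that spans `A` as an `F`-vector space, then `H` contains a unit. -/
theorem unit_theorem (F : Type) [Field F] (A : Type) [Ring A] [Algebra F A]
    [FiniteDimensional F A] (H : AddSubgroup A)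
    (hH : Submodule.span F (H : Set A) = ⊤) :
    ∃ x ∈ H, IsUnit x := by
  let K := AlgebraicClosure F
  let ι : A →ₐ[F] TensorProduct F K A := Algebra.TensorProduct.includeRight
  have hι : Function.Injective ι :=
    Algebra.TensorProduct.includeRight_injective (algebraMap F K).injective
  have hspan : Submodule.span K ((H.map (ι : A →+ TensorProduct F K A) :
      AddSubgroup (TensorProduct F K A)) : Set (TensorProduct F K A)) = ⊤ := by
    have h := Submodule.baseChange_span (R := F) (A := K) (H : Set A)
    rw [hH, Submodule.baseChange_top] at h
    exact h.symm
  obtain ⟨_, ⟨x, hx, rfl⟩, hu⟩ := exists_isUnit_of_isAlgClosed (K := K) _ hspan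
  have : IsArtinianRing A := IsArtinianRing.of_finite F A
  exact ⟨x, hx, isUnit_of_isUnit_map (ι : A →+* TensorProduct F K A) hι hu⟩
end

section
/- Let F be a field of positive characteristic p, let A be a commutative finite-dimensional algebra over F of vector space dimension n, and let H be an additive subgroup of A that spans A as an F-vector space. Then the number of units of A contained in H is at least (p-1)^n. -/
/-!
The maximal ideals of `A` give `F`-linearly independent functionals: for each maximal ideal `m`
take a functional that vanishes on `m` and not at `1`; independence is the Chinese remainder
theorem. An element on which all of them are nonzero lies in no maximal ideal, so it is a unit.
Completing to a basis `f` of the dual space and choosing an `F`-basis `h` of `A` inside `H`, the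
matrix `M i j = f i (h j)` is invertible over `F`, and it suffices to find `(p-1)^n` vectors
`x ∈ 𝔽_p ^ n` for which `M x` has no zero coordinate.

Writing the entries of `M` in a basis of `F` over `𝔽_p` and expanding `det M` multilinearly in the
rows, some choice of `𝔽_p`-linear coordinate functionals `l i : F → 𝔽_p`, one for each row, makes
the matrix `N i j = l i (M i j)` invertible (`exists_coord_det_ne_zero`).
Since `(N x) i = l i ((M x) i)`, each of the `(p-1)^n` vectors `x = N⁻¹ y`, with `y` nowhere zero,
does what is needed.
-/

/-- An invertible matrix over `K` stays invertible after applying a suitable `k`-linear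
functional to each of its rows. -/
lemma exists_coord_det_ne_zero {k K ι : Type*} [Field k] [Field K] [Algebra k K] [Fintype ι]
    [DecidableEq ι] (M : Matrix ι ι K) (hM : M.det ≠ 0) :
    ∃ l : ι → K →ₗ[k] k, (Matrix.of fun i j => l i (M i j)).det ≠ 0 := by
  classical
  let b := Module.Free.chooseBasis k K
  by_contra! h
  apply hM
  -- finitely many basis vectors suffice to express all entries
  let T : Finset (Module.Free.ChooseBasisIndex k K) :=
    Finset.univ.biUnion fun i => Finset.univ.biUnion fun j => (b.repr (M i j)).support
  have hrow : M = fun i => ∑ t ∈ T, b t • fun j => algebraMap k K (b.coord t (M i j)) := by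
    funext i j
    rw [Finset.sum_apply]
    conv_lhs => rw [← b.linearCombination_repr (M i j), Finsupp.linearCombination_apply]
    rw [Finsupp.sum_of_support_subset (s := T)]
    · refine Finset.sum_congr rfl fun t _ => ?_
      simp [Algebra.smul_def, mul_comm]
    · intro t ht
      simp only [T, Finset.mem_biUnion, Finset.mem_univ, true_and]
      exact ⟨i, j, ht⟩
    · simp
  have hdet : M.det = Matrix.detRowAlternating.toMultilinearMap M := rfl
  rw [hdet, hrow, MultilinearMap.map_sum_finset]
  refine Finset.sum_eq_zero fun r _ => ?_
  rw [MultilinearMap.map_smul_univ]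
  have h0 := congrArg (algebraMap k K) (h fun i => b.coord (r i))
  rw [RingHom.map_det, map_zero] at h0
  have h1 : (Matrix.detRowAlternating.toMultilinearMap
      fun i j => algebraMap k K (b.coord (r i) (M i j))) = 0 := h0
  rw [h1, smul_zero]

/-- The dual of a finite-dimensional commutative algebra has a basis whose joint
non-vanishing at an element forces that element to be a unit. -/
lemma exists_dual_basis_isUnit (F A : Type) [Field F] [CommRing A] [Algebra F A]
    [FiniteDimensional F A] :
    ∃ (ι : Type) (f : Module.Basis ι F (Module.Dual F A)),
      ∀ x : A, (∀ i, f i x ≠ 0) → IsUnit x := by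
  classical
  have : IsArtinianRing A := IsArtinianRing.of_finite F A
  have hg : ∀ m : MaximalSpectrum A, ∃ g : Module.Dual F A, g 1 ≠ 0 ∧
      ∀ x ∈ m.asIdeal, g x = 0 := by
    intro m
    have h1 : (1 : A) ∉ m.asIdeal.restrictScalars F :=
      fun h => m.isMaximal.ne_top ((Ideal.eq_top_iff_one _).2 h)
    obtain ⟨g, hg1, hg2⟩ := Submodule.exists_le_ker_of_notMem h1
    exact ⟨g, hg1, fun x hx => hg2 hx⟩
  choose g hg1 hg2 using hg
  have he : ∀ m : MaximalSpectrum A, ∃ e : A, e - 1 ∈ m.asIdeal ∧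
      ∀ m' : MaximalSpectrum A, m' ≠ m → e ∈ m'.asIdeal := by
    intro m
    have hcop : Pairwise fun a b : MaximalSpectrum A => IsCoprime a.asIdeal b.asIdeal := by
      intro a b hab
      rw [Ideal.isCoprime_iff_sup_eq]
      exact a.isMaximal.coprime_of_ne b.isMaximal fun h => hab (MaximalSpectrum.ext h)
    obtain ⟨q, hq⟩ := Ideal.quotientInfToPiQuotient_surj hcop (Pi.single m 1)
    obtain ⟨e, rfl⟩ := Ideal.Quotient.mk_surjective q
    have h2 : ∀ m' : MaximalSpectrum A, Ideal.Quotient.mk m'.asIdeal e =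
        (Pi.single m 1 : ∀ m' : MaximalSpectrum A, A ⧸ m'.asIdeal) m' := fun m' => congrFun hq m'
    refine ⟨e, ?_, fun m' hm' => ?_⟩
    · have := h2 m
      rw [Pi.single_eq_same] at this
      exact Ideal.Quotient.eq.1 this
    · have := h2 m'
      rw [Pi.single_eq_of_ne hm'] at this
      exact Ideal.Quotient.eq_zero_iff_mem.1 this
  choose e he1 he2 using he
  have : Fintype (MaximalSpectrum A) := Fintype.ofFinite _
  have hli : LinearIndependent F g := by
    rw [Fintype.linearIndependent_iff]
    intro c hc m
    have h0 := LinearMap.congr_fun hc (e m)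
    rw [LinearMap.sum_apply, Finset.sum_eq_single m] at h0
    · have h3 : g m (e m) = g m 1 := by
        rw [← sub_eq_zero, ← map_sub]
        exact hg2 m _ (he1 m)
      simpa [h3, hg1 m] using h0
    · intro m' _ hm'
      simp [hg2 m' _ (he2 m m' hm')]
    · simp
  refine ⟨_, Module.Basis.sumExtend hli, fun x hx => ?_⟩
  by_contra hu
  obtain ⟨m, hm, hxm⟩ := exists_max_ideal_of_mem_nonunits hu
  apply hx (Sum.inl ⟨m, hm⟩)
  have : Module.Basis.sumExtend hli (Sum.inl ⟨m, hm⟩) = g ⟨m, hm⟩ := by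
    simp only [Module.Basis.sumExtend, Module.Basis.coe_reindex, Function.comp_apply,
      Module.Basis.extend_apply_self]
    rfl
  rw [this]
  exact hg2 _ x hxm

/-- **Lower bound on the number of units.** If `A` is a commutative finite-dimensional
algebra of dimension `n` over a field `F` of positive characteristic `p`, and `H` is an
additive subgroup of `A` spanning `A` over `F`, then `H` contains at least `(p-1)^n`
units of `A`. -/
theorem card_units_in_subgroup_ge (F : Type) [Field F] (A : Type) [CommRing A] [Algebra F A]
    [FiniteDimensional F A] (p n : ℕ) [CharP F p] (hp : 0 < p)
    (hn : n = Module.finrank F A) (H : AddSubgroup A)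
    (hH : Submodule.span F (H : Set A) = ⊤) :
    (((p - 1) ^ n : ℕ) : Cardinal) ≤ Cardinal.mk {x : A // x ∈ H ∧ IsUnit x} := by
  classical
  have : Fact p.Prime := ⟨(CharP.char_is_prime_or_zero F p).resolve_right hp.ne'⟩
  let _ : Algebra (ZMod p) F := ZMod.algebra F p
  obtain ⟨ι, f, hf⟩ := exists_dual_basis_isUnit F A
  have : Fintype ι := FiniteDimensional.fintypeBasisIndex f
  have hcard : Fintype.card ι = n := by
    rw [hn, ← Subspace.dual_finrank_eq, Module.finrank_eq_card_basis f]
  obtain ⟨s, hsH, hs, hsli⟩ := exists_linearIndependent F (H : Set A)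
  let b : Module.Basis s F A := Module.Basis.mk hsli (by
    rw [Subtype.range_coe, hs, hH])
  have : Fintype s := FiniteDimensional.fintypeBasisIndex b
  let σ : s ≃ ι := Fintype.equivOfCardEq (by
    rw [hcard, hn, Module.finrank_eq_card_basis b])
  let h : Module.Basis ι F A := b.reindex σ
  have hhH : ∀ i, h i ∈ H := fun i => by
    simpa [h, b] using hsH (σ.symm i).2
  let M : Matrix ι ι F := Matrix.of fun i j => f i (h j)
  have hM : M.det ≠ 0 := by
    rw [← isUnit_iff_ne_zero, ← Matrix.isUnit_iff_isUnit_det,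
      ← Matrix.linearIndependent_rows_iff_isUnit]
    -- evaluation on the basis `h` identifies the dual of `A` with `ι → F`
    exact f.linearIndependent.map' (h.constr F).symm.toLinearMap (LinearEquiv.ker _)
  obtain ⟨l, hl⟩ := exists_coord_det_ne_zero (k := ZMod p) M hM
  set N : Matrix ι ι (ZMod p) := Matrix.of fun i j => l i (M i j) with hN
  have hNu : IsUnit N.det := isUnit_iff_ne_zero.2 hl
  let Φ : (ι → ZMod p) → A := fun x => ∑ j, algebraMap (ZMod p) F (x j) • h j
  have hΦH : ∀ x, Φ x ∈ H := fun x => sum_mem fun j _ => by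
    have : algebraMap (ZMod p) F (x j) • h j = (x j).val • h j := by
      rw [← Nat.cast_smul_eq_nsmul F, ← map_natCast (algebraMap (ZMod p) F), ZMod.natCast_zmod_val]
    rw [this]
    exact nsmul_mem (hhH j) _
  have hΦinj : Function.Injective Φ := by
    intro x y hxy
    have := h.linearIndependent.fintypeLinearCombination_injective hxy
    funext j
    exact (algebraMap (ZMod p) F).injective (congrFun this j)
  have hΦl : ∀ x i, l i (f i (Φ x)) = N.mulVec x i := by
    intro x i
    simp only [Φ, map_sum, map_smul, Matrix.mulVec, dotProduct, hN, Matrix.of_apply, M]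
    refine Finset.sum_congr rfl fun j _ => ?_
    rw [smul_eq_mul, ← Algebra.smul_def, map_smul, smul_eq_mul, mul_comm]
  let Ψ : (ι → (ZMod p)ˣ) → {x : A // x ∈ H ∧ IsUnit x} := fun y =>
    ⟨Φ (N⁻¹.mulVec fun i => (y i : ZMod p)), hΦH _, hf _ fun i h0 => by
      have h1 := hΦl (N⁻¹.mulVec fun i => (y i : ZMod p)) i
      rw [h0, map_zero, Matrix.mulVec_mulVec, Matrix.mul_nonsing_inv _ hNu,
        Matrix.one_mulVec] at h1
      exact (y i).ne_zero h1.symm⟩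
  have hΨ : Function.Injective Ψ := by
    intro y z hyz
    have h1 := hΦinj (congrArg Subtype.val hyz)
    have h2 := congrArg N.mulVec h1
    simp only [Matrix.mulVec_mulVec, Matrix.mul_nonsing_inv _ hNu, Matrix.one_mulVec] at h2
    funext i
    exact Units.ext (congrFun h2 i)
  have h3 := Cardinal.mk_le_of_injective hΨ
  rwa [Cardinal.mk_fintype, Fintype.card_fun, ZMod.card_units_eq_totient,
    Nat.totient_prime Fact.out, hcard] at h3
end

section
/- Let F be a field of non-zero characteristic p and let m, n ≥ 0. Let D denote the set of all polynomials g ∈ F[X_1, ..., X_n] that have a non-zero term c·X_1^{d_1} ⋯ X_n^{d_n} (with c ∈ F) satisfying d_i < p^m for all i and d_1 + ... + d_n = deg g. Then for every F-algebra automorphism σ of F[X_1, ..., X_n] that maps the F-linear span of X_1, ..., X_n to itself, one has: g ∈ D if and only if σ(g) ∈ D. -/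
/-!
Put `q = p ^ m` and let `I` be the ideal generated by `X₁^q, …, Xₙ^q`. Being a monomial ideal, `I`
contains a polynomial exactly when each of its terms has an exponent `≥ q`; hence `g ∉ D` if and
only if the homogeneous component of `g` of degree `deg g` lies in `I`
(`not_mem_goodSet_iff`). An automorphism `σ` preserving the span of the variables commutes with
taking homogeneous components (`homogeneousComponent_algHom`), hence preserves the degree, and it
maps `I` into itself because `(∑ cⱼ Xⱼ)^q = ∑ cⱼ^q Xⱼ^q` in characteristic `p`
(`frobeniusIdeal_le_comap`). So the complement of `D` is stable under `σ`, and likewise under `σ⁻¹`.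
-/

open MvPolynomial

/-- The set `D` of polynomials `g ∈ F[X₁, …, Xₙ]` having a non-zero term
`c·X₁^{d₁} ⋯ Xₙ^{dₙ}` with `dᵢ < p^m` for all `i` and `d₁ + ⋯ + dₙ = deg g`. -/
def goodSet (F : Type) [Field F] (p m n : ℕ) : Set (MvPolynomial (Fin n) F) :=
  {g | ∃ d : Fin n → ℕ,
    MvPolynomial.coeff (Finsupp.equivFunOnFinite.symm d) g ≠ 0 ∧
    (∀ i, d i < p ^ m) ∧ (∑ i, d i) = g.totalDegree}

/-- The ideal `(X₁^q, …, Xₙ^q)`, with the generators written as monomials. -/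
noncomputable def frobeniusIdeal (F : Type) [Field F] (q n : ℕ) : Ideal (MvPolynomial (Fin n) F) :=
  Ideal.span ((fun s => monomial s (1 : F)) '' Set.range (fun i : Fin n => Finsupp.single i q))

theorem X_pow_mem_frobeniusIdeal (F : Type) [Field F] (q n : ℕ) (i : Fin n) :
    (X i : MvPolynomial (Fin n) F) ^ q ∈ frobeniusIdeal F q n := by
  rw [X_pow_eq_monomial]
  exact Ideal.subset_span ⟨_, ⟨i, rfl⟩, rfl⟩

theorem mem_frobeniusIdeal_iff (F : Type) [Field F] (q n : ℕ) (g : MvPolynomial (Fin n) F) :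
    g ∈ frobeniusIdeal F q n ↔ ∀ d, coeff d g ≠ 0 → ∃ i, q ≤ d i := by
  simp [frobeniusIdeal, mem_ideal_span_monomial_image]

/-- A polynomial fails to be in `D` exactly when its leading form lies in `(X₁^q, …, Xₙ^q)`. -/
theorem not_mem_goodSet_iff (F : Type) [Field F] (p m n : ℕ) (g : MvPolynomial (Fin n) F) :
    g ∉ goodSet F p m n ↔
      homogeneousComponent g.totalDegree g ∈ frobeniusIdeal F (p ^ m) n := by
  rw [mem_frobeniusIdeal_iff]
  simp only [goodSet, Set.mem_ofPred_eq, not_exists, not_and, coeff_homogeneousComponent]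
  constructor
  · intro h d hd
    by_contra! hlt
    have hdeg : d.degree = g.totalDegree := by
      by_contra hne
      exact hd (if_neg hne)
    rw [if_pos hdeg] at hd
    refine h d ?_ hlt ?_
    · simpa using hd
    · rw [← hdeg, Finsupp.degree_eq_sum]
  · intro h d hd hlt hdeg
    obtain ⟨i, hi⟩ := h (Finsupp.equivFunOnFinite.symm d) (by
      rw [if_pos]
      · exact hd
      · rw [Finsupp.degree_eq_sum]
        simpa using hdeg)
    exact absurd (hlt i) (not_lt.mpr (by simpa using hi))

/-- A substitution by linear forms commutes with taking homogeneous components. -/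
theorem homogeneousComponent_algHom {F : Type} [Field F] {n : ℕ}
    (f : MvPolynomial (Fin n) F →ₐ[F] MvPolynomial (Fin n) F)
    (hf : ∀ i, (f (X i)).IsHomogeneous 1) (k : ℕ) (g : MvPolynomial (Fin n) F) :
    homogeneousComponent k (f g) = f (homogeneousComponent k g) := by
  induction g using MvPolynomial.induction_on' with
  | monomial d a =>
    have h1 : (monomial d a : MvPolynomial (Fin n) F).IsHomogeneous d.degree :=
      isHomogeneous_monomial a rfl
    have h2 : (f (monomial d a)).IsHomogeneous d.degree := by
      have := h1.aeval (fun i => f (X i)) hf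
      have hu : f = aeval fun i => f (X i) := aeval_unique f
      rwa [one_mul, ← hu] at this
    rw [homogeneousComponent_of_mem h1, homogeneousComponent_of_mem h2]
    split_ifs <;> simp
  | add a b ha hb => simp [ha, hb]

theorem totalDegree_algHom_le {F : Type} [Field F] {n : ℕ}
    (f : MvPolynomial (Fin n) F →ₐ[F] MvPolynomial (Fin n) F)
    (hf : ∀ i, (f (X i)).IsHomogeneous 1) (g : MvPolynomial (Fin n) F) :
    (f g).totalDegree ≤ g.totalDegree := by
  refine Finset.sup_le fun d hd => ?_
  by_contra! hlt
  have h := congrArg (coeff d) (homogeneousComponent_algHom f hf d.degree g)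
  have hlt' : g.totalDegree < d.degree := by
    rwa [Finsupp.degree_eq_sum, ← Finsupp.sum_fintype d (fun _ e => e) (fun _ => rfl)]
  rw [homogeneousComponent_eq_zero _ g hlt', coeff_homogeneousComponent, if_pos rfl,
    map_zero, coeff_zero] at h
  exact mem_support_iff.mp hd h

/-- Frobenius is additive, so `σ(Xᵢ)^(p^m)` is a linear combination of the `Xⱼ^(p^m)`. -/
theorem frobeniusIdeal_le_comap {F : Type} [Field F] {p : ℕ} [CharP F p] (hp : p ≠ 0) {m n : ℕ}
    (f : MvPolynomial (Fin n) F →ₐ[F] MvPolynomial (Fin n) F)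
    (hf : ∀ i, f (X i) ∈ Submodule.span F (Set.range (X : Fin n → MvPolynomial (Fin n) F))) :
    frobeniusIdeal F (p ^ m) n ≤ (frobeniusIdeal F (p ^ m) n).comap f := by
  have : Fact p.Prime := ⟨(CharP.char_is_prime_or_zero F p).resolve_right hp⟩
  have key : ∀ x ∈ Submodule.span F (Set.range (X : Fin n → MvPolynomial (Fin n) F)),
      x ^ p ^ m ∈ frobeniusIdeal F (p ^ m) n := by
    intro x hx
    induction hx using Submodule.span_induction with
    | mem x h =>
      obtain ⟨i, rfl⟩ := h
      exact X_pow_mem_frobeniusIdeal F _ n i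
    | zero =>
      rw [zero_pow (pow_ne_zero m hp)]
      exact Ideal.zero_mem _
    | add x y _ _ hx hy =>
      rw [add_pow_char_pow]
      exact Ideal.add_mem _ hx hy
    | smul a x _ hx =>
      rw [smul_pow, smul_eq_C_mul]
      exact Ideal.mul_mem_left _ _ hx
  conv_lhs => rw [frobeniusIdeal]
  rw [Ideal.span_le]
  rintro _ ⟨_, ⟨i, rfl⟩, rfl⟩
  simp only [SetLike.mem_coe, Ideal.mem_comap]
  rw [← X_pow_eq_monomial, map_pow]
  exact key _ (hf i)

theorem not_mem_goodSet_map {F : Type} [Field F] {p : ℕ} [CharP F p] (hp : p ≠ 0)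
    {m n : ℕ} (σ : MvPolynomial (Fin n) F ≃ₐ[F] MvPolynomial (Fin n) F)
    (h₁ : ∀ i, σ (X i) ∈ Submodule.span F (Set.range (X : Fin n → MvPolynomial (Fin n) F)))
    (h₂ : ∀ i, σ.symm (X i) ∈ Submodule.span F (Set.range (X : Fin n → MvPolynomial (Fin n) F)))
    (g : MvPolynomial (Fin n) F) (hg : g ∉ goodSet F p m n) : σ g ∉ goodSet F p m n := by
  have e₁ : ∀ i, (σ.toAlgHom (X i)).IsHomogeneous 1 := fun i => by
    rw [← mem_homogeneousSubmodule, homogeneousSubmodule_one_eq_span_X]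
    exact h₁ i
  have e₂ : ∀ i, (σ.symm.toAlgHom (X i)).IsHomogeneous 1 := fun i => by
    rw [← mem_homogeneousSubmodule, homogeneousSubmodule_one_eq_span_X]
    exact h₂ i
  have hdeg : (σ g).totalDegree = g.totalDegree := by
    apply le_antisymm (totalDegree_algHom_le σ.toAlgHom e₁ g)
    simpa using totalDegree_algHom_le σ.symm.toAlgHom e₂ (σ g)
  rw [not_mem_goodSet_iff] at hg ⊢
  rw [hdeg]
  have := homogeneousComponent_algHom σ.toAlgHom e₁ g.totalDegree g
  have h := frobeniusIdeal_le_comap hp σ.toAlgHom h₁ hg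
  rw [Ideal.mem_comap, ← this] at h
  exact h

/-- The set `D` is invariant under every `F`-algebra automorphism of `F[X₁, …, Xₙ]` that
maps the `F`-linear span of `X₁, …, Xₙ` to itself (char `F = p ≠ 0`). -/
theorem goodSet_invariant (F : Type) [Field F] (p : ℕ) [CharP F p] (hp : p ≠ 0)
    (m n : ℕ) (σ : MvPolynomial (Fin n) F ≃ₐ[F] MvPolynomial (Fin n) F)
    (hσ : Submodule.map σ.toLinearMap
        (Submodule.span F (Set.range (X : Fin n → MvPolynomial (Fin n) F))) =
      Submodule.span F (Set.range (X : Fin n → MvPolynomial (Fin n) F)))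
    (g : MvPolynomial (Fin n) F) :
    g ∈ goodSet F p m n ↔ σ g ∈ goodSet F p m n := by
  have h₁ : ∀ i, σ (X i) ∈ Submodule.span F (Set.range (X : Fin n → MvPolynomial (Fin n) F)) := by
    intro i
    rw [← hσ]
    exact Submodule.mem_map_of_mem (Submodule.subset_span ⟨i, rfl⟩)
  have h₂ : ∀ i, σ.symm (X i) ∈
      Submodule.span F (Set.range (X : Fin n → MvPolynomial (Fin n) F)) := by
    intro i
    have hi : (X i : MvPolynomial (Fin n) F) ∈
        Submodule.span F (Set.range (X : Fin n → MvPolynomial (Fin n) F)) :=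
      Submodule.subset_span ⟨i, rfl⟩
    rw [← hσ] at hi
    obtain ⟨y, hy, hyi⟩ := hi
    rw [← hyi]
    simpa using hy
  rw [← not_iff_not]
  refine ⟨not_mem_goodSet_map hp σ h₁ h₂ g, fun h => ?_⟩
  simpa using not_mem_goodSet_map hp σ.symm h₂ (by simpa using h₁) (σ g) h
end

section
/- (Non-vanishing on subgroups) Let F be a field of non-zero characteristic p, let n ≥ 0, and let g ∈ F[X_1, ..., X_n]. Suppose there exist integers d_1, ..., d_n ∈ {0, 1, ..., p-1} such that the total degree of g equals d_1 + ... + d_n and g has a non-zero coefficient at X_1^{d_1} ⋯ X_n^{d_n}. Then for every additive subgroup H of F^n that spans F^n as an F-vector space, there exists a point of H at which g does not vanish (where g is evaluated at the n coordinates of the point). -/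
/-!
A spanning subgroup `H` contains a basis `b` of `F^n`, hence all combinations of the `b j` with
coefficients in the prime field. If `g` vanished on `H`, the polynomial `g'` obtained from `g` by
passing to the coordinates of `b` would vanish on the grid of points with all coordinates in the
prime field, so Alon's combinatorial Nullstellensatz would give
`g' = ∑ j, q j * (X j ^ p - X j)` with `deg (q j) + p ≤ deg g`.
Returning to the original coordinates, `g` is a sum of terms `r j * (M j ^ p - M j)`
with `M j` a linear form and `deg (r j) + p ≤ deg g`. Since `M j ^ p` is a combination of
the `X i ^ p` (`coeff_mul_linearForm_pow`), the product `r j * M j ^ p` has no monomial with all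
exponents below `p`; and `r j * M j` has degree less than `deg g`. So the coefficient of `g` at
`X ^ d` would be zero.
-/

open MvPolynomial

/-- A substitution by polynomials of degree at most one does not raise the total degree. -/
lemma totalDegree_aeval_le {F σ τ : Type*} [Field F] (L : σ → MvPolynomial τ F)
    (hL : ∀ i, (L i).totalDegree ≤ 1) (g : MvPolynomial σ F) :
    (aeval L g).totalDegree ≤ g.totalDegree := by
  rw [aeval_def, eval₂_eq]
  refine totalDegree_finsetSum_le fun m hm => ?_
  refine (totalDegree_mul _ _).trans ?_
  rw [algebraMap_eq, totalDegree_C, zero_add]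
  refine (totalDegree_finsetProd _ _).trans (le_trans ?_ (le_totalDegree hm))
  refine Finset.sum_le_sum fun i _ => (totalDegree_pow _ _).trans ?_
  simpa using Nat.mul_le_mul_left (m i) (hL i)

lemma totalDegree_linearForm_le {F σ : Type*} [Field F] [Fintype σ] (a : σ → F) :
    (∑ i, C (a i) * X i : MvPolynomial σ F).totalDegree ≤ 1 := by
  refine totalDegree_finsetSum_le fun i _ => (totalDegree_mul _ _).trans ?_
  simp

/-- A spanning set of `F^n` contains a basis, which may be indexed by `Fin n`. -/
lemma exists_basis_mem_of_span_eq_top {F : Type*} [Field F] {n : ℕ} (s : Set (Fin n → F))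
    (hs : Submodule.span F s = ⊤) : ∃ b : Module.Basis (Fin n) F (Fin n → F), ∀ i, b i ∈ s := by
  let b := Module.Basis.ofSpan hs.ge
  let e := b.indexEquiv (Pi.basisFun F (Fin n))
  refine ⟨b.reindex e, fun i => ?_⟩
  rw [Module.Basis.reindex_apply]
  exact Module.Basis.ofSpan_subset hs.ge ⟨_, rfl⟩

/-- The univariate polynomial in `X i` vanishing simply at each point of the prime field is
`X i ^ p - X i`. -/
lemma prod_primeField_X_sub_C {F σ : Type*} [Field F] [DecidableEq F] (p : ℕ) [Fact p.Prime]
    [CharP F p] (i : σ) :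
    ∏ s ∈ Finset.univ.image (ZMod.castHom (dvd_refl p) F), (X i - C s : MvPolynomial σ F) =
      X i ^ p - X i := by
  rw [Finset.prod_image fun x _ y _ h => (ZMod.castHom (dvd_refl p) F).injective h]
  have hpoly : ∏ a : ZMod p, (Polynomial.X - Polynomial.C a) = Polynomial.X ^ p - Polynomial.X := by
    have hroots := FiniteField.roots_X_pow_card_sub_X (ZMod p)
    have hp1 : 1 < p := (Fact.out : p.Prime).one_lt
    rw [ZMod.card] at hroots
    have h := Polynomial.prod_multiset_X_sub_C_of_monic_of_roots_card_eq
      (p := (Polynomial.X ^ p - Polynomial.X : Polynomial (ZMod p)))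
      (Polynomial.monic_X_pow_sub (by simpa using hp1))
      (by rw [hroots, FiniteField.X_pow_card_sub_X_natDegree_eq _ hp1]; simp [ZMod.card])
    rwa [hroots] at h
  have h := congrArg (fun q : Polynomial (ZMod p) =>
    Polynomial.eval₂ (C.comp (ZMod.castHom (dvd_refl p) F)) (X i : MvPolynomial σ F) q)
    hpoly
  simpa [Polynomial.eval₂_finsetProd] using h

lemma totalDegree_X_pow_sub_X {F σ : Type*} [Field F] {p : ℕ} (hp : 1 < p) (i : σ) :
    (X i ^ p - X i : MvPolynomial σ F).totalDegree = p := by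
  rw [sub_eq_add_neg, totalDegree_add_eq_left_of_totalDegree_lt] <;> simp [hp]

/-- In characteristic `p`, the `p`-th power of a linear form lies in the ideal generated by the
`X i ^ p`, so none of its multiples contains a monomial with all exponents below `p`. -/
lemma coeff_mul_linearForm_pow {F σ : Type*} [Field F] [Fintype σ] (p : ℕ) [Fact p.Prime]
    [CharP F p] (a : σ → F) (q : MvPolynomial σ F) (m : σ →₀ ℕ) (hm : ∀ i, m i < p) :
    coeff m (q * (∑ i, C (a i) * X i) ^ p) = 0 := by
  rw [sum_pow_char, Finset.mul_sum, coeff_sum]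
  refine Finset.sum_eq_zero fun i _ => ?_
  rw [mul_pow, ← C_pow, X_pow_eq_monomial, C_mul_monomial, coeff_mul_monomial', if_neg]
  intro h
  simpa using (h i).trans_lt (hm i)

/-- **Non-vanishing on subgroups.** Let `F` be a field of characteristic `p ≠ 0` and let
`g ∈ F[X₁, …, Xₙ]` have total degree `d₁ + ⋯ + dₙ` with `dᵢ ∈ {0, …, p-1}` and non-zero
coefficient at `X₁^{d₁} ⋯ Xₙ^{dₙ}`. Then `g` does not vanish identically on any additive
subgroup `H` of `F^n` spanning `F^n` over `F`. -/
theorem nonvanishing_on_subgroups (F : Type) [Field F] (p : ℕ) [CharP F p] (hp : p ≠ 0)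
    (n : ℕ) (g : MvPolynomial (Fin n) F) (d : Fin n → ℕ) (hd : ∀ i, d i ≤ p - 1)
    (hdeg : g.totalDegree = ∑ i, d i)
    (hcoeff : MvPolynomial.coeff (Finsupp.equivFunOnFinite.symm d) g ≠ 0)
    (H : AddSubgroup (Fin n → F))
    (hH : Submodule.span F (H : Set (Fin n → F)) = ⊤) :
    ∃ y ∈ H, MvPolynomial.eval y g ≠ 0 := by
  classical
  have hprime : p.Prime := (CharP.char_is_prime_or_zero F p).resolve_right hp
  have : Fact p.Prime := ⟨hprime⟩
  by_contra! hvan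
  obtain ⟨b, hb⟩ := exists_basis_mem_of_span_eq_top _ hH
  -- `L` and `M` are the mutually inverse linear substitutions given by the basis `b`.
  let L : Fin n → MvPolynomial (Fin n) F := fun i => ∑ j, C (b j i) * X j
  let M : Fin n → MvPolynomial (Fin n) F := fun j => ∑ i, C (b.repr (Pi.single i 1) j) * X i
  have hML : ∀ i, aeval M (L i) = X i := by
    intro i
    have hsum : ∀ k, ∑ j, b j i * b.repr (Pi.single k 1) j = if i = k then 1 else 0 := by
      intro k
      have := congrFun (b.sum_repr (Pi.single k (1 : F))) i
      simpa [Finset.sum_apply, Pi.single_apply, mul_comm] using this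
    simp only [L, M, map_sum, map_mul, aeval_X, algHom_C, algebraMap_eq, Finset.mul_sum]
    rw [Finset.sum_comm]
    simp only [← mul_assoc, ← C_mul, ← Finset.sum_mul, ← map_sum, hsum]
    simp
  have hg : aeval M (aeval L g) = g := by
    rw [← AlgHom.comp_apply, comp_aeval, funext hML, aeval_X_left, AlgHom.id_apply]
  -- At a point `t` with coordinates in the prime field, `aeval L g` takes the value of `g` at
  -- `∑ j, t j • b j`, which is an integer combination of the `b j`.
  have heval : ∀ t : Fin n → F,
      (∀ i, t i ∈ Finset.univ.image (ZMod.castHom (dvd_refl p) F)) →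
      eval t (aeval L g) = 0 := by
    intro t ht
    have hpt : eval t (aeval L g) = eval (∑ j, t j • b j) g := by
      rw [← coe_aeval_eq_eval, ← coe_aeval_eq_eval]
      change ((aeval t).comp (aeval L)) g = _
      rw [comp_aeval]
      have hpoint : (fun i => aeval t (L i)) = ∑ j, t j • b j := by
        ext i
        simp [L, mul_comm]
      rw [hpoint]
      rfl
    rw [hpt]
    refine hvan _ (H.sum_mem fun j _ => ?_)
    obtain ⟨z, -, hz⟩ := Finset.mem_image.1 (ht j)
    have : t j • b j = z.val • b j := by
      rw [← hz, ← Nat.cast_smul_eq_nsmul F]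
      simp
    rw [this]
    exact H.nsmul_mem (hb j) _
  obtain ⟨q, hq, hlin⟩ := combinatorial_nullstellensatz_exists_linearCombination
    (fun _ => Finset.univ.image (ZMod.castHom (dvd_refl p) F))
    (fun _ => Finset.univ_nonempty.image _) (aeval L g) heval
  simp only [prod_primeField_X_sub_C] at hq hlin
  have hLdeg := totalDegree_aeval_le L (fun i => totalDegree_linearForm_le _) g
  apply hcoeff
  rw [← hg, hlin, Finsupp.linearCombination_apply, Finsupp.sum, map_sum, coeff_sum]
  refine Finset.sum_eq_zero fun j hj => ?_
  rw [smul_eq_mul, map_mul, map_sub, map_pow, aeval_X, mul_sub, coeff_sub,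
    coeff_mul_linearForm_pow p _ _ _ fun i => ?_, zero_sub, neg_eq_zero]
  · apply coeff_eq_zero_of_totalDegree_lt
    have h1 := hq j
    have hX := totalDegree_X_pow_sub_X (F := F) hprime.one_lt j
    rw [totalDegree_mul_of_isDomain (fun h0 => by
      rw [h0, totalDegree_zero] at hX; exact hp hX.symm) (Finsupp.mem_support_iff.1 hj), hX] at h1
    have h2 := totalDegree_mul (aeval M (q j)) (M j)
    have h3 := totalDegree_aeval_le M (fun i => totalDegree_linearForm_le _) (q j)
    have h4 : (M j).totalDegree ≤ 1 := totalDegree_linearForm_le _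
    have h5 : ∑ i ∈ (Finsupp.equivFunOnFinite.symm d).support,
        (Finsupp.equivFunOnFinite.symm d) i = ∑ i, d i :=
      Finset.sum_subset (Finset.subset_univ _) (by simp)
    have := hprime.two_le
    omega
  · have := hd i
    have := hprime.pos
    simp only [Finsupp.coe_equivFunOnFinite_symm]
    omega
end

section
/- (Generator theorem) Let F be a field, A an F-algebra, and M an A-module that is finite-dimensional as an F-vector space. Suppose M is cyclic, i.e., M = Ax₀ for some x₀ ∈ M. Let H be an additive subgroup of M that spans M as an F-vector space. Then there exists x ∈ H with M = Ax. -/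
/-!
Choose a generator `x₀` and let `B` be the image of `A` in `End_F M`, a finite-dimensional algebra
with `B x₀ = M`. The preimage of `H` under `b ↦ b x₀` is an additive subgroup of `B` which contains
the kernel and therefore spans `B`; if it contains a unit `b`, then `b x₀ ∈ H` generates `M`. So
everything reduces to finding a unit in an additive subgroup `H` spanning a finite-dimensional
algebra `B` (`exists_isUnit_mem_of_span_eq_top`).

Let `K` be an algebraic closure of `F`. Modulo its radical, `K ⊗ B` is a product of matrix algebras
over `K`, which embeds block diagonally into a single matrix algebra. The map from `B` to `K ⊗ B`,
the reduction modulo the radical and the block diagonal embedding all reflect units, so it suffices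
to find a matrix of nonzero determinant in an additive group of matrices whose `K`-span contains all
diagonal matrix units (`exists_det_ne_zero_of_single_mem_span`). As `H` may be finite, a Zariski
density argument is not available. Instead, the full polarization of the determinant is multilinear
and takes the value `1` at the diagonal matrix units, hence it does not vanish identically on tuples
from the group. Its value on such a tuple is a signed sum of determinants of partial sums of the
tuple (`sum_perm_eq_sum_finset`), and all of these partial sums belong to the group.
-/

/-- The polarization identity for the form `v ↦ G (v, …, v)` attached to a multilinear map `G`,
valid in every characteristic. -/
theorem sum_perm_eq_sum_finset {K V W ι : Type*} [Field K] [AddCommGroup V] [Module K V]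
    [AddCommGroup W] [Module K W] [Fintype ι] [DecidableEq ι]
    (G : MultilinearMap K (fun _ : ι => V) W) (x : ι → V) :
    ∑ σ : Equiv.Perm ι, G (fun i => x (σ i)) =
      ∑ T : Finset ι, ((-1 : ℤ) ^ T.card) • G (fun _ => ∑ i ∈ Tᶜ, x i) := by
  have expand : ∀ T : Finset ι, ((-1 : ℤ) ^ T.card) • G (fun _ => ∑ i ∈ Tᶜ, x i) =
      ∑ r : ι → ι, (if T ⊆ (Finset.univ.image r)ᶜ then ((-1 : ℤ) ^ T.card) else 0) •
        G (fun i => x (r i)) := by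
    intro T
    rw [G.map_sum_finset (fun _ => x) (fun _ => Tᶜ), Finset.smul_sum]
    simp only [ite_smul, zero_smul]
    rw [← Finset.sum_filter]
    refine Finset.sum_congr ?_ fun _ _ => rfl
    ext r
    simp only [Fintype.mem_piFinset, Finset.mem_compl, Finset.mem_filter, Finset.mem_univ,
      true_and, Finset.subset_iff, Finset.mem_image, not_exists]
    exact ⟨fun h j hj i hi => h i (hi ▸ hj), fun h i hi => h hi i rfl⟩
  simp only [expand]
  rw [Finset.sum_comm]
  simp only [← Finset.sum_smul]
  -- An alternating sum over the subsets of the complement of the image of `r` vanishes unless `r` is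
  -- surjective, so only the permutations survive.
  have coeff : ∀ r : ι → ι,
      (∑ T : Finset ι, if T ⊆ (Finset.univ.image r)ᶜ then ((-1 : ℤ) ^ T.card) else 0) =
        if Function.Bijective r then 1 else 0 := by
    intro r
    rw [← Finset.sum_filter]
    have : Finset.univ.filter (fun T => T ⊆ (Finset.univ.image r)ᶜ) =
        ((Finset.univ.image r)ᶜ).powerset := by ext; simp
    rw [this, Finset.sum_powerset_neg_one_pow_card]
    refine if_congr ?_ rfl rfl
    rw [Finset.compl_eq_empty_iff, ← Finite.surjective_iff_bijective, Finset.eq_univ_iff_forall]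
    simp [Function.Surjective]
  simp only [coeff, ite_smul, one_smul, zero_smul]
  rw [← Finset.sum_filter]
  refine Finset.sum_bij (fun σ _ => ⇑σ) ?_ ?_ ?_ ?_
  · intro σ _
    simp
  · intro σ _ τ _ h
    exact DFunLike.coe_injective h
  · intro r hr
    exact ⟨Equiv.ofBijective r (by simpa using hr), Finset.mem_univ _, rfl⟩
  · intro _ _
    rfl

theorem multilinear_eq_zero_of_mem_span {K V W ι : Type*} [Field K] [AddCommGroup V] [Module K V]
    [AddCommGroup W] [Module K W] [Fintype ι] [DecidableEq ι]
    (T : MultilinearMap K (fun _ : ι => V) W) (H : Set V)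
    (hT : ∀ v : ι → V, (∀ i, v i ∈ H) → T v = 0)
    (v : ι → V) (hv : ∀ i, v i ∈ Submodule.span K H) : T v = 0 := by
  have key : ∀ s : Finset ι, ∀ v : ι → V, (∀ i ∈ s, v i ∈ Submodule.span K H) →
      (∀ i ∉ s, v i ∈ H) → T v = 0 := by
    intro s
    induction s using Finset.induction_on with
    | empty => exact fun v _ h => hT v fun i => h i (by simp)
    | insert j s hj ih =>
      intro v h1 h2
      have hspan : ∀ y ∈ Submodule.span K H, T (Function.update v j y) = 0 := by
        intro y hy
        induction hy using Submodule.span_induction with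
        | mem y hy =>
          refine ih _ (fun i hi => ?_) (fun i hi => ?_)
          · have : i ≠ j := fun e => hj (e ▸ hi)
            simpa [this] using h1 i (by simp [hi])
          · by_cases e : i = j
            · subst e
              simpa using hy
            · simpa [e] using h2 i (by simp [e, hi])
        | zero => exact T.map_update_zero v j
        | add a b _ _ ha hb => rw [T.map_update_add, ha, hb, add_zero]
        | smul c a _ ha => rw [T.map_update_smul, ha, smul_zero]
      simpa using hspan (v j) (h1 j (by simp))
  exact key Finset.univ v (fun i _ => hv i) (by simp)

/-- The polarized determinant of a tuple `v` is the sum over all permutations `σ` of the determinant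
of the matrix whose `i`-th row is the `i`-th row of `v (σ i)`. At the diagonal matrix units only
`σ = 1` contributes. -/
theorem exists_det_ne_zero_of_single_mem_span {K ι : Type*} [Field K] [Fintype ι] [DecidableEq ι]
    (H : AddSubgroup (Matrix ι ι K))
    (hH : ∀ j, Matrix.single j j (1 : K) ∈ Submodule.span K (H : Set (Matrix ι ι K))) :
    ∃ h ∈ H, h.det ≠ 0 := by
  by_contra! hdet
  -- `G v` is the determinant of the matrix whose `i`-th row is the `i`-th row of `v i`.
  let G : MultilinearMap K (fun _ : ι => Matrix ι ι K) K :=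
    (Matrix.detRowAlternating (n := ι) (R := K)).toMultilinearMap.compLinearMap
      (fun i => (LinearMap.proj i : (ι → ι → K) →ₗ[K] (ι → K)))
  have hG : ∀ v, G v = (Matrix.of fun i => v i i).det := fun _ => rfl
  let T : MultilinearMap K (fun _ : ι => Matrix ι ι K) K :=
    ∑ σ : Equiv.Perm ι, G.domDomCongr σ
  have hT : ∀ v, T v = ∑ σ : Equiv.Perm ι, G (fun i => v (σ i)) := by
    intro v
    simp [T]
  have hzero := multilinear_eq_zero_of_mem_span T (H : Set (Matrix ι ι K)) (by
    intro v hv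
    rw [hT, sum_perm_eq_sum_finset]
    refine Finset.sum_eq_zero fun S _ => ?_
    rw [hG]
    have : (∑ i ∈ Sᶜ, v i).det = 0 := hdet _ (H.sum_mem fun i _ => hv i)
    change _ • (∑ i ∈ Sᶜ, v i).det = 0
    rw [this, smul_zero]) (fun j => Matrix.single j j 1) hH
  rw [hT, Finset.sum_eq_single 1] at hzero
  · have : (Matrix.of fun i => Matrix.single i i (1 : K) i) = (1 : Matrix ι ι K) := by
      ext i j
      simp [Matrix.single_apply, Matrix.one_apply]
    rw [hG] at hzero
    simp [this] at hzero
  · intro σ _ hσ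
    obtain ⟨i, hi⟩ : ∃ i, σ i ≠ i := by
      by_contra! h
      exact hσ (Equiv.ext h)
    rw [hG]
    refine Matrix.det_eq_zero_of_row_eq_zero i fun j => ?_
    simp [hi]
  · simp

/-- Injective homomorphisms out of a finite-dimensional algebra reflect units, since there every
element that is not a zero divisor is a unit. -/
theorem isUnit_of_isUnit_map_of_injective {F B C : Type*} [Field F] [Ring B] [Algebra F B]
    [FiniteDimensional F B] [Ring C] (f : B →+* C) (hf : Function.Injective f) {b : B}
    (hb : IsUnit (f b)) : IsUnit b := by
  have hl : Function.Surjective (LinearMap.mulLeft F b) := by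
    refine LinearMap.injective_iff_surjective.1 ((injective_iff_map_eq_zero _).2 fun c hc => ?_)
    have : f b * f c = 0 := by rw [← map_mul]; simpa using congrArg f hc
    exact hf (by rw [hb.mul_right_eq_zero.1 this, map_zero])
  have hr : Function.Surjective (LinearMap.mulRight F b) := by
    refine LinearMap.injective_iff_surjective.1 ((injective_iff_map_eq_zero _).2 fun c hc => ?_)
    have : f c * f b = 0 := by rw [← map_mul]; simpa using congrArg f hc
    exact hf (by rw [hb.mul_left_eq_zero.1 this, map_zero])
  obtain ⟨c, hc⟩ := hl 1
  obtain ⟨d, hd⟩ := hr 1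
  exact isUnit_iff_exists_and_exists.2 ⟨⟨c, hc⟩, ⟨d, hd⟩⟩

/-- Units of an Artinian ring are detected modulo the Jacobson radical, because the radical is
nilpotent. -/
theorem isUnit_of_isUnit_mk_jacobson {B : Type*} [Ring B] [IsArtinianRing B] {b : B}
    (hb : IsUnit (Ideal.Quotient.mk (Ring.jacobson B) b)) : IsUnit b := by
  have hnil : ∀ c : B, Ideal.Quotient.mk (Ring.jacobson B) c = 1 → IsUnit c := by
    intro c hc
    have hmem : c - 1 ∈ Ring.jacobson B := by
      rw [← Ideal.Quotient.eq_zero_iff_mem, map_sub, hc, map_one, sub_self]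
    obtain ⟨n, hn⟩ := IsSemiprimaryRing.isNilpotent (R := B)
    have : IsNilpotent (c - 1) := ⟨n, by
      have := Ideal.pow_mem_pow hmem n
      rw [hn] at this
      simpa using this⟩
    simpa using this.isUnit_add_one
  obtain ⟨u, hu⟩ := hb
  obtain ⟨c, hc⟩ := Ideal.Quotient.mk_surjective (I := Ring.jacobson B) (↑u⁻¹)
  obtain ⟨w, hw⟩ := hnil (b * c) (by rw [map_mul, hc, ← hu, Units.mul_inv])
  obtain ⟨z, hz⟩ := hnil (c * b) (by rw [map_mul, hc, ← hu, Units.inv_mul])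
  refine isUnit_iff_exists_and_exists.2 ⟨⟨c * ↑w⁻¹, ?_⟩, ⟨↑z⁻¹ * c, ?_⟩⟩
  · rw [← mul_assoc, ← hw, Units.mul_inv]
  · rw [mul_assoc, ← hz, Units.inv_mul]

theorem exists_isUnit_mem_of_isAlgClosed {K B : Type*} [Field K] [IsAlgClosed K] [Ring B]
    [Algebra K B] [FiniteDimensional K B] (H : AddSubgroup B)
    (hH : Submodule.span K (H : Set B) = ⊤) : ∃ h ∈ H, IsUnit h := by
  have := IsArtinianRing.of_finite K B
  have : IsSemisimpleRing (B ⧸ Ring.jacobson B) := IsSemiprimaryRing.isSemisimpleRing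
  obtain ⟨n, d, -, ⟨e⟩⟩ :=
    IsSemisimpleRing.exists_algEquiv_pi_matrix_of_isAlgClosed K (B ⧸ Ring.jacobson B)
  let bd : (∀ i, Matrix (Fin (d i)) (Fin (d i)) K) →+*
      Matrix (Σ i, Fin (d i)) (Σ i, Fin (d i)) K := Matrix.blockDiagonal'RingHom _ K
  let φ : B →ₗ[K] Matrix (Σ i, Fin (d i)) (Σ i, Fin (d i)) K :=
    { toFun := fun b => bd (e (Ideal.Quotient.mkₐ K (Ring.jacobson B) b))
      map_add' := by intros; simp only [map_add]
      map_smul' := by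
        intro c b
        simp only [map_smul, RingHom.id_apply]
        exact Matrix.blockDiagonal'_smul c _ }
  obtain ⟨_, ⟨h, hh, rfl⟩, hdet⟩ :=
    exists_det_ne_zero_of_single_mem_span (H.map φ.toAddMonoidHom) (by
      rintro ⟨i, j⟩
      have hs : Submodule.span K ((H.map φ.toAddMonoidHom : AddSubgroup _) : Set _) =
          LinearMap.range φ := by
        rw [AddSubgroup.coe_map]
        change Submodule.span K (φ '' _) = _
        rw [Submodule.span_image, hH, Submodule.map_top]
      rw [hs]
      obtain ⟨b, hb⟩ := Ideal.Quotient.mk_surjective (I := Ring.jacobson B)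
        (e.symm (Pi.single i (Matrix.single j j 1)))
      refine ⟨b, ?_⟩
      change bd (e (Ideal.Quotient.mk (Ring.jacobson B) b)) = _
      rw [hb, AlgEquiv.apply_symm_apply]
      change Matrix.blockDiagonal' _ = _
      ext ⟨i1, j1⟩ ⟨i2, j2⟩
      by_cases h12 : i1 = i2
      · subst h12
        by_cases h1 : i = i1
        · subst h1
          simp [Matrix.blockDiagonal'_apply, Matrix.single_apply]
        · simp [Matrix.blockDiagonal'_apply, h1, Ne.symm h1]
      · rw [Matrix.blockDiagonal'_apply_ne _ _ _ h12, Matrix.single_apply, if_neg]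
        rintro ⟨h1, h2⟩
        exact h12 ((congrArg Sigma.fst h1).symm.trans (congrArg Sigma.fst h2)))
  refine ⟨h, hh, isUnit_of_isUnit_mk_jacobson ?_⟩
  have h1 : IsUnit (bd (e (Ideal.Quotient.mk (Ring.jacobson B) h))) :=
    (Matrix.isUnit_iff_isUnit_det _).2 (isUnit_iff_ne_zero.2 hdet)
  have h2 := isUnit_of_isUnit_map_of_injective (F := K) bd
    (fun _ _ h => Matrix.blockDiagonal'_injective h) h1
  exact (MulEquiv.isUnit_map e).1 h2

open scoped TensorProduct in
theorem exists_isUnit_mem_of_span_eq_top {F B : Type*} [Field F] [Ring B]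
    [Algebra F B] [FiniteDimensional F B] (H : AddSubgroup B)
    (hH : Submodule.span F (H : Set B) = ⊤) : ∃ h ∈ H, IsUnit h := by
  let K := AlgebraicClosure F
  let ι : B →ₐ[F] K ⊗[F] B := Algebra.TensorProduct.includeRight
  obtain ⟨_, ⟨h, hh, rfl⟩, hu⟩ :=
    exists_isUnit_mem_of_isAlgClosed (K := K) (H.map ι.toRingHom.toAddMonoidHom) (by
      have hmem : ∀ b : B, ι b ∈ Submodule.span K
          ((H.map ι.toRingHom.toAddMonoidHom : AddSubgroup _) : Set (K ⊗[F] B)) := by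
        intro b
        have hb : b ∈ Submodule.span F (H : Set B) := hH ▸ Submodule.mem_top
        induction hb using Submodule.span_induction with
        | mem b hb => exact Submodule.subset_span ⟨b, hb, rfl⟩
        | zero => rw [map_zero]; exact zero_mem _
        | add a b _ _ ha hb => rw [map_add]; exact add_mem ha hb
        | smul c a _ ha =>
          rw [map_smul, ← algebraMap_smul K c (ι a)]
          exact Submodule.smul_mem _ _ ha
      refine Submodule.eq_top_iff'.2 fun y => ?_
      induction y using TensorProduct.induction_on with
      | zero => exact zero_mem _
      | add a b ha hb => exact add_mem ha hb
      | tmul k b =>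
        have : k ⊗ₜ[F] b = k • ι b := by simp [ι, TensorProduct.smul_tmul']
        rw [this]
        exact Submodule.smul_mem _ _ (hmem b))
  exact ⟨h, hh, isUnit_of_isUnit_map_of_injective (F := F) ι.toRingHom
    (Algebra.TensorProduct.includeRight_injective (algebraMap F K).injective) hu⟩

/-- **Generator theorem.** Let `A` be an algebra over a field `F` and `M` a cyclic `A`-module
that is finite-dimensional over `F`. If `H` is an additive subgroup of `M` spanning `M` as an
`F`-vector space, then `H` contains a generator of `M`. -/
theorem generator_theorem (F : Type) [Field F] (A : Type) [Ring A] [Algebra F A]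
    (M : Type) [AddCommGroup M] [Module F M] [Module A M] [IsScalarTower F A M]
    [FiniteDimensional F M]
    (hcyc : ∃ x₀ : M, Submodule.span A {x₀} = ⊤)
    (H : AddSubgroup M) (hH : Submodule.span F (H : Set M) = ⊤) :
    ∃ x ∈ H, Submodule.span A {x} = ⊤ := by
  obtain ⟨x₀, hx₀⟩ := hcyc
  have : SMulCommClass A F M := IsScalarTower.to_smulCommClass'
  let ρ : A →ₐ[F] Module.End F M := Algebra.lsmul F F M
  let ev : ρ.range →ₗ[F] M :=
    (LinearMap.applyₗ x₀ : Module.End F M →ₗ[F] M) ∘ₗ ρ.range.val.toLinearMap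
  have hev : ∀ b, ev b = (b : Module.End F M) x₀ := fun _ => rfl
  have hsurj : Function.Surjective ev := by
    intro y
    obtain ⟨a, ha⟩ := Submodule.mem_span_singleton.1 (hx₀ ▸ Submodule.mem_top : y ∈ _)
    exact ⟨⟨ρ a, a, rfl⟩, ha⟩
  let H' : AddSubgroup ρ.range := H.comap ev.toAddMonoidHom
  have hH' : Submodule.span F (H' : Set ρ.range) = ⊤ := by
    have himg : (Submodule.span F (H' : Set ρ.range)).map ev = ⊤ := by
      rw [← Submodule.span_image, ← hH]
      congr 1
      exact Set.image_preimage_eq _ hsurj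
    refine Submodule.eq_top_iff'.2 fun b => ?_
    obtain ⟨c, hc, hcb⟩ := (himg ▸ Submodule.mem_top :
      ev b ∈ (Submodule.span F (H' : Set ρ.range)).map ev)
    -- `b` and `c` differ by an element of `ker ev`, which is contained in `H'`.
    have hk : b - c ∈ H' := by
      change ev (b - c) ∈ H
      rw [map_sub, hcb, sub_self]
      exact H.zero_mem
    simpa using add_mem (Submodule.subset_span hk) hc
  obtain ⟨h, hh, u, rfl⟩ := exists_isUnit_mem_of_span_eq_top H' hH'
  refine ⟨ev u, hh, Submodule.eq_top_iff'.2 fun y => ?_⟩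
  obtain ⟨b, rfl⟩ := hsurj y
  obtain ⟨a, ha⟩ := (b * ↑u⁻¹ : ρ.range).2
  refine Submodule.mem_span_singleton.2 ⟨a, ?_⟩
  have h1 : ρ a * ((u : ρ.range) : Module.End F M) = b := by
    change (ρ : A →+* Module.End F M) a = _ at ha
    have : ((b * ↑u⁻¹ * ↑u : ρ.range) : Module.End F M) = b := by rw [Units.inv_mul_cancel_right]
    rw [← this]
    change _ = ((b * ↑u⁻¹ : ρ.range) : Module.End F M) * _
    rw [← ha]
    rfl
  rw [hev b, ← h1]
  rfl
end

section
/- (Glynn's determinant formula) Let p be a prime number, F a field of characteristic p, n ≥ 0, and let A = (a_{ij})_{i,j=1}^n be an n×n matrix over F. Then the coefficient of the polynomial ∏_{j=1}^n (Σ_{i=1}^n a_{ij} X_i)^{p-1} at the monomial X_1^{p-1} X_2^{p-1} ⋯ X_n^{p-1} equals (det A)^{p-1}. -/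
/-!
Write `q = p - 1` and let a matrix `a` act on polynomials by the substitution
`X_j ↦ ∑ i, a i j X_i`, so that the coefficient in question is the top coefficient (the one at
`∏ X_i ^ q`) of the image of `∏ X_j ^ q`.

In characteristic `p` this substitution preserves the ideal generated by the `X_i ^ p`, because
`(∑ i, a i j X_i) ^ p = ∑ i, a i j ^ p X_i ^ p`. Modulo that ideal, polynomials that are
homogeneous of degree `n * q` form a line spanned by `∏ X_i ^ q`: every other monomial of this
degree has an exponent at least `p`. Hence the substitution acts on this line by a scalar, namely
the coefficient of the theorem (`coeff_lin`), and this scalar is multiplicative in `a`. Since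
`det a ^ q` is multiplicative as well, it is enough to compare the two on diagonal matrices and on
transvections, which generate all matrices over a field.
-/

open MvPolynomial

namespace Glynn

variable {F : Type} [Field F] {n : ℕ}

/-- The linear substitution `X_j ↦ ∑ i, a i j X_i`. -/
noncomputable def lin (a : Matrix (Fin n) (Fin n) F) :
    MvPolynomial (Fin n) F →ₐ[F] MvPolynomial (Fin n) F :=
  aeval fun j => ∑ i : Fin n, C (a i j) * X i

/-- The exponent of the monomial `∏ X_i ^ q`. -/
noncomputable abbrev top (n q : ℕ) : Fin n →₀ ℕ := Finsupp.equivFunOnFinite.symm fun _ => q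

lemma lin_X (a : Matrix (Fin n) (Fin n) F) (j : Fin n) :
    lin a (X j) = ∑ i : Fin n, C (a i j) * X i := by
  simp [lin]

lemma lin_mul (a b : Matrix (Fin n) (Fin n) F) (P : MvPolynomial (Fin n) F) :
    lin (a * b) P = lin a (lin b P) := by
  suffices h : lin (a * b) = (lin a).comp (lin b) by rw [h]; rfl
  refine MvPolynomial.algHom_ext fun j => ?_
  have hC : ∀ c : F, lin a (C c) = C c := fun c => (lin a).commutes c
  simp only [AlgHom.comp_apply, lin_X, map_sum, map_mul, hC, Matrix.mul_apply, Finset.sum_mul,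
    Finset.mul_sum]
  rw [Finset.sum_comm]
  exact Finset.sum_congr rfl fun _ _ => Finset.sum_congr rfl fun _ _ => by ring

lemma prod_X_pow (q : ℕ) :
    (∏ j : Fin n, (X j : MvPolynomial (Fin n) F) ^ q) = monomial (top n q) 1 := by
  rw [monomial_eq, Finsupp.prod_fintype _ _ (by simp)]
  simp

lemma coeff_X_pow_mul_eq_zero {p : ℕ} (hp : 0 < p) (i : Fin n) (Q : MvPolynomial (Fin n) F) :
    coeff (top n (p - 1)) (X i ^ p * Q) = 0 := by
  rw [X_pow_eq_monomial, coeff_monomial_mul', if_neg]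
  intro h
  have := h i
  simp at this
  omega

/-- The only monomial of degree `n * (p - 1)` with all exponents below `p` is the top one. -/
lemma exists_le_of_ne_top {p : ℕ} (m : Fin n →₀ ℕ) (hm : m.degree = n * (p - 1))
    (hne : m ≠ top n (p - 1)) : ∃ i, p ≤ m i := by
  by_contra! h
  apply hne
  have hle : ∀ i ∈ Finset.univ, m i ≤ p - 1 := fun i _ => by have := h i; omega
  have hs : ∑ i, m i = ∑ _i : Fin n, (p - 1) := by
    rw [Finsupp.degree_eq_sum] at hm
    simp [hm]
  have := (Finset.sum_eq_sum_iff_of_le hle).1 hs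
  ext i
  simpa using this i (Finset.mem_univ i)

/-- A linear substitution multiplies the top coefficient of a form of degree `n * (p - 1)` by a
scalar depending only on the substitution. -/
lemma coeff_lin {p : ℕ} (hp : p.Prime) [CharP F p] (a : Matrix (Fin n) (Fin n) F)
    (P : MvPolynomial (Fin n) F) (hP : P.IsHomogeneous (n * (p - 1))) :
    coeff (top n (p - 1)) (lin a P) =
      coeff (top n (p - 1)) (lin a (monomial (top n (p - 1)) 1)) * coeff (top n (p - 1)) P := by
  have : Fact p.Prime := ⟨hp⟩
  have key : ∀ m ∈ P.support, m ≠ top n (p - 1) →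
      coeff (top n (p - 1)) (lin a (monomial m (coeff m P))) = 0 := by
    intro m hm hne
    obtain ⟨i, hi⟩ := exists_le_of_ne_top m
      (by rw [Finsupp.degree_eq_weight_one]; exact hP (mem_support_iff.1 hm)) hne
    have : monomial m (coeff m P) = X i ^ p * monomial (m - Finsupp.single i p) (coeff m P) := by
      rw [X_pow_eq_monomial, monomial_mul, one_mul,
        add_tsub_cancel_of_le (Finsupp.single_le_iff.2 hi)]
    rw [this, map_mul, map_pow, lin_X, sum_pow_char, Finset.sum_mul, coeff_sum]
    refine Finset.sum_eq_zero fun k _ => ?_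
    rw [mul_pow, mul_right_comm, mul_comm]
    exact coeff_X_pow_mul_eq_zero hp.pos k _
  conv_lhs => rw [P.as_sum, map_sum, coeff_sum]
  rw [Finset.sum_eq_single (top n (p - 1)) key]
  · have : monomial (top n (p - 1)) (coeff (top n (p - 1)) P) =
        coeff (top n (p - 1)) P • monomial (top n (p - 1)) (1 : F) := by
      simp [smul_monomial]
    rw [this, map_smul, coeff_smul, smul_eq_mul, mul_comm]
  · intro h
    rw [notMem_support_iff.1 h]
    simp

lemma isHomogeneous_lin_top (q : ℕ) (a : Matrix (Fin n) (Fin n) F) :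
    (lin a (monomial (top n q) 1)).IsHomogeneous (n * q) := by
  rw [← prod_X_pow, map_prod]
  have := IsHomogeneous.prod (Finset.univ : Finset (Fin n)) (fun j => lin a (X j ^ q))
    (fun _ => q) fun j _ => by
      rw [map_pow, lin_X]
      have h1 : (∑ i : Fin n, C (a i j) * X i : MvPolynomial (Fin n) F).IsHomogeneous 1 :=
        IsHomogeneous.sum _ _ _ fun i _ => by
          simpa using (isHomogeneous_C (Fin n) (a i j)).mul (isHomogeneous_X F i)
      simpa using h1.pow q
  simpa using this

lemma coeff_lin_diagonal (q : ℕ) (d : Fin n → F) :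
    coeff (top n q) (lin (Matrix.diagonal d) (monomial (top n q) 1)) =
      (Matrix.diagonal d).det ^ q := by
  have h : ∀ j, lin (Matrix.diagonal d) (X j) = C (d j) * X j := fun j => by
    rw [lin_X, Finset.sum_eq_single j]
    · simp
    · intro i _ hi
      simp [Matrix.diagonal_apply_ne _ hi]
    · simp
  rw [← prod_X_pow, map_prod]
  simp only [map_pow, h, mul_pow, Finset.prod_mul_distrib]
  rw [prod_X_pow, Finset.prod_pow, ← map_prod, ← map_pow, coeff_C_mul, coeff_monomial, if_pos rfl,
    mul_one, Matrix.det_diagonal]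

/-- The image of `∏ X_k ^ (p - 1)` under a transvection `X_j ↦ X_j + c X_i` differs from it by a
multiple of `X_i ^ p`. -/
lemma coeff_lin_transvection {p : ℕ} (hp : 0 < p) (i j : Fin n) (hij : i ≠ j) (c : F) :
    coeff (top n (p - 1)) (lin (Matrix.transvection i j c) (monomial (top n (p - 1)) 1)) = 1 := by
  have h : ∀ k, lin (Matrix.transvection i j c) (X k) = X k + if k = j then C c * X i else 0 := by
    intro k
    rw [lin_X]
    simp only [Matrix.transvection, Matrix.add_apply, map_add, add_mul, Finset.sum_add_distrib]
    congr 1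
    · simp [Matrix.one_apply]
    · rw [Finset.sum_eq_single i]
      · by_cases hk : k = j
        · subst hk; simp
        · simp [hk, Matrix.single_apply_of_col_ne _ _ (Ne.symm hk)]
      · intro l _ hl
        simp [Matrix.single_apply_of_row_ne hl.symm]
      · simp
  obtain ⟨Q, hQ⟩ : (X i : MvPolynomial (Fin n) F) ∣
      (X j + C c * X i) ^ (p - 1) - X j ^ (p - 1) :=
    Dvd.dvd.trans ⟨C c, by ring⟩ (sub_dvd_pow_sub_pow (X j + C c * X i) (X j) (p - 1))
  have hi : i ∈ Finset.univ.erase j := by simp [hij]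
  have hrest : ∏ k ∈ Finset.univ.erase j, lin (Matrix.transvection i j c) (X k ^ (p - 1)) =
      ∏ k ∈ Finset.univ.erase j, (X k : MvPolynomial (Fin n) F) ^ (p - 1) :=
    Finset.prod_congr rfl fun k hk => by rw [map_pow, h, if_neg (Finset.ne_of_mem_erase hk), add_zero]
  have hX : (X i : MvPolynomial (Fin n) F) ^ p = X i * X i ^ (p - 1) := by
    rw [← pow_succ', Nat.sub_add_cancel hp]
  have : lin (Matrix.transvection i j c) (monomial (top n (p - 1)) 1) =
      monomial (top n (p - 1)) 1 +
        X i ^ p * (Q * ∏ k ∈ (Finset.univ.erase j).erase i, X k ^ (p - 1)) := by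
    rw [← prod_X_pow, map_prod, ← Finset.mul_prod_erase _ _ (Finset.mem_univ j), hrest,
      ← Finset.mul_prod_erase _ (fun k => X k ^ (p - 1)) (Finset.mem_univ j),
      ← Finset.mul_prod_erase _ _ hi, map_pow, h, if_pos rfl, sub_eq_iff_eq_add.1 hQ, hX]
    ring
  rw [this, coeff_add, coeff_X_pow_mul_eq_zero hp, coeff_monomial, if_pos rfl, add_zero]

end Glynn

/-- **Glynn's determinant formula.** For a field `F` of prime characteristic `p` and an
`n × n` matrix `A = (a_{ij})` over `F`, the coefficient of `∏_j (Σ_i a_{ij} X_i)^{p-1}` at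
the monomial `X_1^{p-1} ⋯ X_n^{p-1}` equals `(det A)^{p-1}`. -/
theorem glynn_determinant_formula (p : ℕ) (hp : p.Prime) (F : Type) [Field F] [CharP F p]
    (n : ℕ) (a : Matrix (Fin n) (Fin n) F) :
    MvPolynomial.coeff (Finsupp.equivFunOnFinite.symm fun _ => p - 1)
      (∏ j : Fin n, (∑ i : Fin n, MvPolynomial.C (a i j) * MvPolynomial.X i) ^ (p - 1))
      = a.det ^ (p - 1) := by
  have main : coeff (Glynn.top n (p - 1)) (Glynn.lin a (monomial (Glynn.top n (p - 1)) 1)) =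
      a.det ^ (p - 1) := by
    induction a using Matrix.diagonal_transvection_induction with
    | hdiag d _ => exact Glynn.coeff_lin_diagonal _ d
    | htransvec t =>
      rw [Matrix.TransvectionStruct.det, one_pow]
      exact Glynn.coeff_lin_transvection hp.pos t.i t.j t.hij t.c
    | hmul a b ha hb =>
      rw [Glynn.lin_mul, Glynn.coeff_lin hp a _ (Glynn.isHomogeneous_lin_top _ b), ha, hb,
        Matrix.det_mul, mul_pow]
  rw [← Glynn.prod_X_pow, map_prod] at main
  simpa only [map_pow, Glynn.lin_X] using main
end
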